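/- arXiv:1402.4495 — 2 statements merged into one kernel-verified Lean document; each statement's English description precedes it below -/
import Mathlib

section
/- Let A be a semisimple ring that is an algebra over ℚ, and let G be a finite group acting on A by ring automorphisms. Then the twisted group ring A{G} is semisimple, where A{G} is the free left A-module with basis G, with multiplication determined by (a·σ)(b·τ) = (a·σ(b))·(στ) for a, b ∈ A and σ, τ ∈ G. (Lemma 13 of the paper.) -/
/-- The twisted group ring `A{G}` attached to an action of a group `G` on a ring `A` by ring
automorphisms: as an additive group it is the free left `A`-module with basis `G` (realized as
functions `G → A`, `G` being finite), and the multiplication is determined by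
`(a·σ)(b·τ) = (a·σ(b))·(στ)`. -/
def TwistedGroupRing (A G : Type*) := G → A

namespace TwistedGroupRing

variable {A G : Type*} [Ring A] [Group G] [Fintype G] [DecidableEq G] [MulSemiringAction G A]

instance : AddCommGroup (TwistedGroupRing A G) := Pi.addCommGroup

instance : Mul (TwistedGroupRing A G) :=
  ⟨fun f g σ => ∑ τ : G, f τ * (τ • g (τ⁻¹ * σ))⟩

theorem mul_def (f g : TwistedGroupRing A G) (σ : G) :
    (f * g) σ = ∑ τ : G, f τ * (τ • g (τ⁻¹ * σ)) := rfl

instance : One (TwistedGroupRing A G) := ⟨Pi.single (1 : G) (1 : A)⟩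

theorem one_def : (1 : TwistedGroupRing A G) = Pi.single (1 : G) (1 : A) := rfl

noncomputable instance instRing : Ring (TwistedGroupRing A G) where
  __ := (inferInstance : AddCommGroup (TwistedGroupRing A G))
  mul := (· * ·)
  one := 1
  left_distrib f g h := funext fun σ => by
    simp only [mul_def]
    show ∑ τ : G, f τ * (τ • (g (τ⁻¹ * σ) + h (τ⁻¹ * σ))) = _
    simp only [smul_add, mul_add, Finset.sum_add_distrib]
    rfl
  right_distrib f g h := funext fun σ => by
    simp only [mul_def]
    show ∑ τ : G, (f τ + g τ) * (τ • h (τ⁻¹ * σ)) = _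
    simp only [add_mul, Finset.sum_add_distrib]
    rfl
  zero_mul f := funext fun σ => by
    simp only [mul_def]
    show ∑ τ : G, (0 : A) * (τ • f (τ⁻¹ * σ)) = (0 : A)
    simp
  mul_zero f := funext fun σ => by
    simp only [mul_def]
    show ∑ τ : G, f τ * (τ • (0 : A)) = (0 : A)
    simp
  one_mul f := funext fun σ => by
    rw [mul_def, Finset.sum_eq_single (1 : G)]
    · rw [one_def, Pi.single_eq_same, one_mul, one_smul, inv_one, one_mul]
    · intro τ _ hτ
      rw [one_def, Pi.single_eq_of_ne hτ, zero_mul]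
    · intro h; exact absurd (Finset.mem_univ _) h
  mul_one f := funext fun σ => by
    rw [mul_def, Finset.sum_eq_single σ]
    · rw [one_def, inv_mul_cancel, Pi.single_eq_same, smul_one, mul_one]
    · intro τ _ hτ
      have hne : τ⁻¹ * σ ≠ 1 := fun hcontra => hτ (by
        have := congrArg (fun x => τ * x) hcontra
        simpa [mul_assoc] using this.symm)
      rw [one_def, Pi.single_eq_of_ne hne, smul_zero, mul_zero]
    · intro h; exact absurd (Finset.mem_univ _) h
  mul_assoc f g h := funext fun σ => by
    have lhs : (f * g * h) σ
        = ∑ τ : G, ∑ υ : G, f υ * (υ • g (υ⁻¹ * τ)) * (τ • h (τ⁻¹ * σ)) := by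
      rw [mul_def]
      refine Finset.sum_congr rfl fun τ _ => ?_
      rw [mul_def, Finset.sum_mul]
    have rhs : (f * (g * h)) σ
        = ∑ υ : G, ∑ ρ : G, f υ * ((υ • g ρ) * ((υ * ρ) • h (ρ⁻¹ * (υ⁻¹ * σ)))) := by
      rw [mul_def]
      refine Finset.sum_congr rfl fun υ _ => ?_
      rw [mul_def, Finset.smul_sum, Finset.mul_sum]
      refine Finset.sum_congr rfl fun ρ _ => ?_
      rw [smul_mul', smul_smul]
    rw [lhs, rhs, Finset.sum_comm]
    refine Finset.sum_congr rfl fun υ _ => ?_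
    refine (Fintype.sum_equiv (Equiv.mulLeft υ) _ _ fun ρ => ?_).symm
    simp only [Equiv.coe_mulLeft, inv_mul_cancel_left, mul_inv_rev, mul_assoc]

end TwistedGroupRing

namespace TwistedGroupRing

section Aux

variable {A G : Type*} [Ring A] [Group G] [Fintype G] [DecidableEq G] [MulSemiringAction G A]

/-- The element `a·σ`. -/
def sgl (σ : G) (a : A) : TwistedGroupRing A G := Pi.single (M := fun _ => A) σ a

theorem sgl_mul_sgl (σ τ : G) (a b : A) :
    sgl σ a * sgl τ b = sgl (σ * τ) (a * σ • b) := by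
  funext ρ
  rw [mul_def, Finset.sum_eq_single σ]
  · by_cases h : ρ = σ * τ
    · subst h
      simp [sgl]
    · have h' : σ⁻¹ * ρ ≠ τ := fun e => h (by rw [← e]; simp)
      simp [sgl, Pi.single_eq_of_ne h, Pi.single_eq_of_ne h']
  · intro υ _ hυ
    simp [sgl, Pi.single_eq_of_ne hυ]
  · intro h; exact absurd (Finset.mem_univ _) h

theorem sgl_add (σ : G) (a b : A) : sgl σ (a + b) = sgl σ a + sgl σ b :=
  Pi.single_add (f := fun _ => A) σ a b

theorem sgl_zero (σ : G) : sgl σ (0 : A) = 0 := Pi.single_zero (M := fun _ => A) σ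

theorem sum_sgl (f : TwistedGroupRing A G) : ∑ σ : G, sgl σ (f σ) = f :=
  Finset.univ_sum_single (M := fun _ => A) f

/-- The embedding of `A`. -/
def emb : A →+* TwistedGroupRing A G where
  toFun := sgl 1
  map_one' := rfl
  map_mul' a b := by rw [sgl_mul_sgl, one_smul, one_mul]
  map_zero' := sgl_zero 1
  map_add' := sgl_add 1

theorem emb_apply (a : A) : emb (G := G) a = sgl 1 a := rfl

theorem exists_proj [IsSemisimpleRing A] (I : Submodule (TwistedGroupRing A G)
    (TwistedGroupRing A G)) :
    ∃ p : TwistedGroupRing A G →+ TwistedGroupRing A G, (∀ x, p x ∈ I) ∧ (∀ x ∈ I, p x = x) ∧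
      ∀ (a : A) x, p (sgl 1 a * x) = sgl 1 a * p x := by
  letI : Module A (TwistedGroupRing A G) := Module.compHom _ (emb (A := A) (G := G))
  let J : Submodule A (TwistedGroupRing A G) :=
    { carrier := I
      add_mem' := I.add_mem
      zero_mem' := I.zero_mem
      smul_mem' := fun a x hx => I.smul_mem (emb a) hx }
  obtain ⟨K, hK⟩ := exists_isCompl J
  let q := J.linearProjOfIsCompl K hK
  refine ⟨(J.subtype ∘ₗ q).toAddMonoidHom, fun x => (q x).2, fun x hx => ?_, fun a x => ?_⟩
  · exact congrArg Subtype.val (Submodule.linearProjOfIsCompl_apply_left hK ⟨x, hx⟩)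
  · exact (J.subtype ∘ₗ q).map_smul a x

theorem semisimple_aux [Algebra ℚ A] [IsSemisimpleRing A] :
    IsSemisimpleRing (TwistedGroupRing A G) := by
  obtain ⟨c, hc⟩ : ∃ c : TwistedGroupRing A G, c * (Fintype.card G : TwistedGroupRing A G) = 1 := by
    refine ⟨emb (algebraMap ℚ A (Fintype.card G : ℚ)⁻¹), ?_⟩
    have h : (Fintype.card G : ℚ) ≠ 0 := by exact_mod_cast Fintype.card_ne_zero
    rw [← map_natCast (emb (A := A) (G := G)), ← map_natCast (algebraMap ℚ A), ← map_mul,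
      ← map_mul, inv_mul_cancel₀ h, map_one, map_one]
  have hcomm : ∀ x, c * x = x * c := fun x => by
    have hn := fun y : TwistedGroupRing A G => (Nat.cast_commute (Fintype.card G) y).eq
    calc c * x = c * x * (c * (Fintype.card G : TwistedGroupRing A G)) := by rw [hc, mul_one]
      _ = c * (Fintype.card G : TwistedGroupRing A G) * (x * c) := by
        rw [mul_assoc c _ (x * c), hn]; simp only [mul_assoc]
      _ = x * c := by rw [hc, one_mul]
  have key : ∀ I : Submodule (TwistedGroupRing A G) (TwistedGroupRing A G), ∃ J, IsCompl I J := by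
    intro I
    obtain ⟨p, hpI, hpid, hpA⟩ := exists_proj I
    let S : TwistedGroupRing A G → TwistedGroupRing A G :=
      fun x => ∑ σ : G, sgl σ⁻¹ 1 * p (sgl σ 1 * x)
    have S_def : ∀ x, S x = ∑ σ : G, sgl σ⁻¹ 1 * p (sgl σ 1 * x) := fun _ => rfl
    have S_add : ∀ x y, S (x + y) = S x + S y := fun x y => by
      simp only [S_def, mul_add, map_add, Finset.sum_add_distrib]
    have S_sgl : ∀ τ a x, S (sgl τ a * x) = sgl τ a * S x := fun τ a x => by
      rw [S_def, S_def, Finset.mul_sum]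
      refine Fintype.sum_equiv (Equiv.mulRight τ) _ _ fun σ => ?_
      have e : (sgl σ 1 : TwistedGroupRing A G) * sgl τ a = sgl 1 (σ • a) * sgl (σ * τ) 1 := by
        simp [sgl_mul_sgl]
      rw [← mul_assoc, e, mul_assoc, hpA, ← mul_assoc, ← mul_assoc, Equiv.coe_mulRight]
      congr 1
      simp [sgl_mul_sgl]
    let S' : TwistedGroupRing A G →+ TwistedGroupRing A G := AddMonoidHom.mk' S S_add
    have S_mul : ∀ f x, S (f * x) = f * S x := fun f x => by
      conv_lhs => rw [← sum_sgl f, Finset.sum_mul]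
      conv_rhs => rw [← sum_sgl f, Finset.sum_mul]
      exact (map_sum S' _ _).trans (Finset.sum_congr rfl fun τ _ => S_sgl _ _ _)
    let q : TwistedGroupRing A G →ₗ[TwistedGroupRing A G] I :=
      { toFun := fun x => ⟨c * S x, I.smul_mem c (I.sum_mem fun σ _ => I.smul_mem _ (hpI _))⟩
        map_add' := fun x y => Subtype.ext (by
          show c * S (x + y) = c * S x + c * S y
          rw [S_add, mul_add])
        map_smul' := fun f x => Subtype.ext (by
          show c * S (f * x) = f * (c * S x)
          rw [S_mul, ← mul_assoc, hcomm, mul_assoc]) }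
    refine ⟨LinearMap.ker q, LinearMap.isCompl_of_proj (f := q) fun x => Subtype.ext ?_⟩
    show c * S x = x
    have : S x = (Fintype.card G : TwistedGroupRing A G) * x := by
      rw [S_def, Finset.sum_congr rfl (g := fun _ => (x : TwistedGroupRing A G))]
      · simp
      · intro σ _
        rw [hpid (sgl σ 1 * x.1) (I.smul_mem (sgl σ 1) x.2), ← mul_assoc, sgl_mul_sgl]
        simp only [inv_mul_cancel, smul_one, mul_one]
        exact one_mul _
    rw [this, ← mul_assoc, hc, one_mul]
  haveI : ComplementedLattice (Submodule (TwistedGroupRing A G) (TwistedGroupRing A G)) := ⟨key⟩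
  exact (isSemisimpleModule_iff _ _).mpr this

end Aux

end TwistedGroupRing

/-- **Lemma 13**: if `A` is a semisimple ring which is a `ℚ`-algebra and `G` is a finite group
acting on `A` by ring automorphisms, then the twisted group ring `A{G}` is semisimple. -/
theorem stmt1 (A G : Type*) [Ring A] [Algebra ℚ A] [IsSemisimpleRing A]
    [Group G] [Fintype G] [DecidableEq G] [MulSemiringAction G A] :
    IsSemisimpleRing (TwistedGroupRing A G) := by
  exact TwistedGroupRing.semisimple_aux
end

section
/- Let E be a number field and let Σ be a set of real embeddings of E (field embeddings σ : E → ℝ). Then every unit u of the ℝ-algebra E ⊗_ℚ ℝ can be written as u = (a ⊗ 1)·y, where a ∈ E^× and y is a unit of E ⊗_ℚ ℝ such that (σ ⊗ id_ℝ)(y) > 0 for every σ ∈ Σ. (This is the commutative content of the first identity (6) in Lemma 6 of the paper, proved using that E^× is dense in (E ⊗_ℚ ℝ)^×.) -/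
open TensorProduct

/-- **Lemma 6, first identity of (6), commutative form**: for a number field `E` and a set `Sigma0`
of real embeddings of `E`, every unit `u` of `E ⊗[ℚ] ℝ` can be written as `u = (a ⊗ 1) * y`
with `a ∈ Eˣ` and `y` a unit of `E ⊗[ℚ] ℝ` such that `(σ ⊗ id ℝ)(y) > 0` for all `σ ∈ Sigma0`. -/
theorem stmt4 (E : Type*) [Field E] [NumberField E] (Sigma0 : Set (E →+* ℝ))
    (u : (E ⊗[ℚ] ℝ)ˣ) :
    ∃ (a : Eˣ) (y : (E ⊗[ℚ] ℝ)ˣ),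
      (u : E ⊗[ℚ] ℝ) = ((a : E) ⊗ₜ[ℚ] (1 : ℝ)) * (y : E ⊗[ℚ] ℝ) ∧
      ∀ σ ∈ Sigma0,
        0 < Algebra.TensorProduct.productMap σ.toRatAlgHom (AlgHom.id ℚ ℝ) (y : E ⊗[ℚ] ℝ) := by
  rcases Sigma0.eq_empty_or_nonempty with rfl | ⟨σ₀, -⟩
  · exact ⟨1, u, by simp [← Algebra.TensorProduct.one_def], by simp⟩
  let φ : (E →+* ℝ) → (E ⊗[ℚ] ℝ →ₐ[ℚ] ℝ) := fun σ =>
    Algebra.TensorProduct.productMap σ.toRatAlgHom (AlgHom.id ℚ ℝ)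
  have hφ : ∀ σ x r, φ σ (x ⊗ₜ[ℚ] r) = σ x * r := fun σ x r => by simp [φ]
  obtain ⟨S, hS⟩ := TensorProduct.exists_finset (u : E ⊗[ℚ] ℝ)
  have hu : ∀ σ, φ σ u = ∑ i : S, σ i.1.1 * i.1.2 := fun σ => by
    rw [hS, map_sum, ← Finset.sum_coe_sort]
    simp only [hφ]
  have hne : ∀ σ, φ σ u ≠ 0 := fun σ => (u.isUnit.map (φ σ)).ne_zero
  let U : Set (S → ℝ) := ⋂ σ : E →+* ℝ, {x | 0 < (∑ i : S, σ i.1.1 * x i) * φ σ u}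
  have hU : IsOpen U := isOpen_iInter_of_finite fun σ =>
    isOpen_lt continuous_const (by fun_prop)
  have hUn : U.Nonempty := ⟨fun i => i.1.2, by
    simp only [U, Set.mem_iInter, Set.mem_setOf_eq]
    intro σ
    rw [← hu]
    exact mul_self_pos.2 (hne σ)⟩
  have hd : DenseRange (Pi.map (fun (_ : S) (q : ℚ) => (q : ℝ))) :=
    DenseRange.piMap fun _ => Rat.denseRange_cast
  obtain ⟨q, hq⟩ := hd.exists_mem_open hU hUn
  let a : E := ∑ i : S, i.1.1 * (q i : E)
  have ha : ∀ σ : E →+* ℝ, 0 < σ a * φ σ u := fun σ => by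
    have := Set.mem_iInter.1 hq σ
    simpa [a, map_sum] using this
  have ha0 : a ≠ 0 := fun h => by simpa [h] using ha σ₀
  let b : (E ⊗[ℚ] ℝ)ˣ :=
    Units.map (Algebra.TensorProduct.includeLeft : E →ₐ[ℚ] E ⊗[ℚ] ℝ).toMonoidHom (Units.mk0 a ha0)
  have hb : (b : E ⊗[ℚ] ℝ) = a ⊗ₜ[ℚ] (1 : ℝ) := rfl
  have huy : (u : E ⊗[ℚ] ℝ) = (a ⊗ₜ[ℚ] (1 : ℝ)) * ((b⁻¹ * u : (E ⊗[ℚ] ℝ)ˣ) : E ⊗[ℚ] ℝ) := by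
    rw [← hb, ← Units.val_mul, mul_inv_cancel_left]
  refine ⟨Units.mk0 a ha0, b⁻¹ * u, huy, fun σ _ => ?_⟩
  change 0 < φ σ _
  have h1 := ha σ
  have h2 := congrArg (φ σ) huy
  rw [map_mul, hφ, mul_one] at h2
  rw [h2, ← mul_assoc] at h1
  exact pos_of_mul_pos_right h1 (mul_self_nonneg _)
end
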